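/- arXiv:2601.22088 — 8 statements merged into one kernel-verified Lean document; each statement's English description precedes it below -/
import Mathlib

section
/- Let s, c2, δ ∈ ℝ be constants, let u, ρ : ℝ × ℝ → ℝ be C² functions satisfying the magnetic two-component Hunter–Saxton system pointwise, i.e. ∂t∂x u = -(1/2)(∂x u)² - u ∂x∂x u + (1/2)ρ² - (sρ + 2(c2 - sδ)) and ∂t ρ = -∂x(ρ u) + s ∂x u, and let φ : ℝ × ℝ → ℝ be differentiable in t with ∂t φ(t,x) = u(t, φ(t,x)) and φ(0,x) = x. Then for each fixed x the Lagrangian variables U(t) := (∂x u)(t, φ(t,x)) and P(t) := ρ(t, φ(t,x)) satisfy the ODE system U'(t) = -(1/2)U(t)² + (1/2)P(t)² - (s P(t) + 2(c2 - sδ)) and P'(t) = -P(t)U(t) + s U(t), with U(0) = (∂x u)(0,x) and P(0) = ρ(0,x). -/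
/-- Partial derivative in the first (time) variable. -/
noncomputable def pdt (f : ℝ × ℝ → ℝ) (t x : ℝ) : ℝ := deriv (fun τ => f (τ, x)) t

/-- Partial derivative in the second (space) variable. -/
noncomputable def pdx (f : ℝ × ℝ → ℝ) (t x : ℝ) : ℝ := deriv (fun y => f (t, y)) x

theorem pdx_eq_fderiv {f : ℝ × ℝ → ℝ} {t x : ℝ} (hf : DifferentiableAt ℝ f (t, x)) :
    pdx f t x = fderiv ℝ f (t, x) (0, 1) := by
  have h : HasDerivAt (fun y : ℝ => ((t, y) : ℝ × ℝ)) (0, 1) x :=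
    (hasDerivAt_const x t).prodMk (hasDerivAt_id x)
  exact (hf.hasFDerivAt.comp_hasDerivAt x h).deriv

theorem pdt_eq_fderiv {f : ℝ × ℝ → ℝ} {t x : ℝ} (hf : DifferentiableAt ℝ f (t, x)) :
    pdt f t x = fderiv ℝ f (t, x) (1, 0) := by
  have h : HasDerivAt (fun y : ℝ => ((y, x) : ℝ × ℝ)) (1, 0) t :=
    (hasDerivAt_id t).prodMk (hasDerivAt_const t x)
  exact (hf.hasFDerivAt.comp_hasDerivAt t h).deriv

/-- Chain rule along a curve: the material derivative. -/
theorem hasDerivAt_along {f : ℝ × ℝ → ℝ} (hf : Differentiable ℝ f) {g : ℝ → ℝ} {v t : ℝ}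
    (hg : HasDerivAt g v t) :
    HasDerivAt (fun τ => f (τ, g τ)) (pdt f t (g t) + v * pdx f t (g t)) t := by
  have h : HasDerivAt (fun y : ℝ => ((y, g y) : ℝ × ℝ)) (1, v) t :=
    (hasDerivAt_id t).prodMk hg
  have h2 := (hf (t, g t)).hasFDerivAt.comp_hasDerivAt t h
  rw [pdt_eq_fderiv (hf _), pdx_eq_fderiv (hf _)]
  have e : ((1, v) : ℝ × ℝ) = (1, 0) + v • (0, 1) := by simp
  rw [e, map_add, map_smul, smul_eq_mul] at h2
  exact h2

theorem stmt_0 (s c2 δ : ℝ) (u ρ : ℝ × ℝ → ℝ)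
    (hu : ContDiff ℝ 2 u) (hρ : ContDiff ℝ 2 ρ)
    (hPDE1 : ∀ t x : ℝ,
      pdt (fun p => pdx u p.1 p.2) t x =
        -(1/2) * (pdx u t x)^2 - u (t, x) * pdx (fun p => pdx u p.1 p.2) t x
          + (1/2) * (ρ (t, x))^2 - (s * ρ (t, x) + 2 * (c2 - s * δ)))
    (hPDE2 : ∀ t x : ℝ,
      pdt ρ t x = -(pdx (fun p => ρ p * u p) t x) + s * pdx u t x)
    (φ : ℝ × ℝ → ℝ)
    (hφ : ∀ t x : ℝ, HasDerivAt (fun τ => φ (τ, x)) (u (t, φ (t, x))) t)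
    (hφ0 : ∀ x : ℝ, φ (0, x) = x) (x : ℝ) :
    (∀ t : ℝ, HasDerivAt (fun τ => pdx u τ (φ (τ, x)))
      (-(1/2) * (pdx u t (φ (t, x)))^2 + (1/2) * (ρ (t, φ (t, x)))^2
        - (s * ρ (t, φ (t, x)) + 2 * (c2 - s * δ))) t) ∧
    (∀ t : ℝ, HasDerivAt (fun τ => ρ (τ, φ (τ, x)))
      (-(ρ (t, φ (t, x))) * pdx u t (φ (t, x)) + s * pdx u t (φ (t, x))) t) ∧
    pdx u 0 (φ (0, x)) = pdx u 0 x ∧ ρ (0, φ (0, x)) = ρ (0, x) := by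
  have hud : Differentiable ℝ u := hu.differentiable (by norm_num)
  have hρd : Differentiable ℝ ρ := hρ.differentiable (by norm_num)
  have hux : Differentiable ℝ (fun p : ℝ × ℝ => pdx u p.1 p.2) := by
    have e : (fun p : ℝ × ℝ => pdx u p.1 p.2) = fun p => fderiv ℝ u p (0, 1) := by
      funext p
      exact pdx_eq_fderiv (hud _)
    rw [e]
    have h1 : ContDiff ℝ 1 (fderiv ℝ u) := hu.fderiv_right (by norm_num)
    exact (h1.differentiable (by norm_num)).clm_apply (differentiable_const _)
  refine ⟨fun t => ?_, fun t => ?_, by rw [hφ0], by rw [hφ0]⟩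
  · have h := hasDerivAt_along hux (hφ t x)
    rw [hPDE1] at h
    convert h using 1
    ring
  · have h := hasDerivAt_along hρd (hφ t x)
    have hp : pdx (fun p => ρ p * u p) t (φ (t, x)) =
        pdx ρ t (φ (t, x)) * u (t, φ (t, x)) + ρ (t, φ (t, x)) * pdx u t (φ (t, x)) := by
      unfold pdx
      have d : ∀ f : ℝ × ℝ → ℝ, Differentiable ℝ f →
          DifferentiableAt ℝ (fun y => f (t, y)) (φ (t, x)) := fun f hf => by fun_prop
      exact deriv_fun_mul (d ρ hρd) (d u hud)
    rw [hPDE2, hp] at h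
    convert h using 1
    ring
end

section
/- Let κ > 0 be real and let W₀ ∈ ℂ with Im W₀ ≠ 0. Then the denominator κ·cos(κt/2) + W₀·sin(κt/2) is nonzero for every t ∈ ℝ, and the function W : ℝ → ℂ defined by W(t) := κ·(W₀·cos(κt/2) - κ·sin(κt/2)) / (κ·cos(κt/2) + W₀·sin(κt/2)) is differentiable on all of ℝ, satisfies W'(t) = -(1/2)(W(t)² + κ²) for all t ∈ ℝ, and W(0) = W₀. -/
/-- The explicit solution of the complex Riccati equation `W' = -(1/2)(W² + κ²)`. -/
noncomputable def Wsol (κ : ℝ) (W₀ : ℂ) (t : ℝ) : ℂ :=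
  (κ : ℂ) * (W₀ * (Real.cos (κ * t / 2) : ℝ) - (κ : ℂ) * (Real.sin (κ * t / 2) : ℝ)) /
    ((κ : ℂ) * (Real.cos (κ * t / 2) : ℝ) + W₀ * (Real.sin (κ * t / 2) : ℝ))

theorem stmt_3 (κ : ℝ) (hκ : 0 < κ) (W₀ : ℂ) (hW₀ : W₀.im ≠ 0) :
    (∀ t : ℝ, (κ : ℂ) * (Real.cos (κ * t / 2) : ℝ) + W₀ * (Real.sin (κ * t / 2) : ℝ) ≠ 0) ∧
    (∀ t : ℝ, HasDerivAt (Wsol κ W₀) (-(1/2) * ((Wsol κ W₀ t)^2 + ((κ^2 : ℝ) : ℂ))) t) ∧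
    Wsol κ W₀ 0 = W₀ := by
  have hD : ∀ t : ℝ,
      (κ : ℂ) * (Real.cos (κ * t / 2) : ℝ) + W₀ * (Real.sin (κ * t / 2) : ℝ) ≠ 0 := by
    intro t h
    have him := congrArg Complex.im h
    have hre := congrArg Complex.re h
    simp only [Complex.add_im, Complex.add_re, Complex.mul_im, Complex.mul_re, Complex.ofReal_re,
      Complex.ofReal_im, Complex.zero_re, Complex.zero_im] at him hre
    have hs : Real.sin (κ * t / 2) = 0 := by
      have : W₀.im * Real.sin (κ * t / 2) = 0 := by linarith
      exact (mul_eq_zero.mp this).resolve_left hW₀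
    have hc : Real.cos (κ * t / 2) = 0 := by
      rw [hs] at hre
      have : κ * Real.cos (κ * t / 2) = 0 := by linarith
      exact (mul_eq_zero.mp this).resolve_left hκ.ne'
    have := Real.sin_sq_add_cos_sq (κ * t / 2)
    rw [hs, hc] at this
    norm_num at this
  refine ⟨hD, ?_, ?_⟩
  · intro t
    have hl : HasDerivAt (fun t : ℝ => κ * t / 2) (κ / 2) t := by
      simpa using ((hasDerivAt_id t).const_mul κ).div_const 2
    have hc := hl.cos.ofReal_comp
    have hs := hl.sin.ofReal_comp
    have hN := ((hc.const_mul W₀).sub (hs.const_mul (κ : ℂ))).const_mul (κ : ℂ)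
    have hDd := (hc.const_mul (κ : ℂ)).add (hs.const_mul W₀)
    have h := hN.div hDd (hD t)
    have h0 := hD t
    refine HasDerivAt.congr_deriv (f := Wsol κ W₀) h ?_
    simp only [Wsol, Pi.add_apply, Pi.sub_apply]
    push_cast at h0 ⊢
    generalize Complex.cos (κ * t / 2) = c at *
    generalize Complex.sin (κ * t / 2) = s at *
    field_simp
    ring
  · have : (κ : ℂ) ≠ 0 := by exact_mod_cast hκ.ne'
    simp [Wsol]
    field_simp
end

section
/- Let s ∈ ℝ, κ > 0, and a, b ∈ ℝ, and set W₀ := a + i(b - s) ∈ ℂ. Then there exists t₀ > 0 such that κ·cos(κt₀/2) + W₀·sin(κt₀/2) = 0 if and only if b = s and a, κ admit such a zero; more precisely: if b ≠ s then κ·cos(κt/2) + W₀·sin(κt/2) ≠ 0 for all t ∈ ℝ, while if b = s then the smallest positive zero is t₀ = (2/κ)·arccot(-a/κ), i.e. the unique t₀ with κ·t₀/2 ∈ (0, π) and cot(κ·t₀/2) = -a/κ. -/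
theorem aux_split (s κ a b c d : ℝ) :
    ((κ : ℂ) * (c : ℝ) + ((a : ℂ) + Complex.I * ((b : ℂ) - (s : ℂ))) * (d : ℝ) = 0) ↔
      (κ * c + a * d = 0 ∧ (b - s) * d = 0) := by
  rw [Complex.ext_iff]
  simp

theorem aux_unique (κ a x y : ℝ) (hκ : 0 < κ) (hx : x ∈ Set.Ioo 0 Real.pi)
    (hy : y ∈ Set.Ioo 0 Real.pi) (h1 : κ * Real.cos x + a * Real.sin x = 0)
    (h2 : κ * Real.cos y + a * Real.sin y = 0) : x = y := by
  have h : Real.sin (x - y) = 0 := by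
    have : κ * Real.sin (x - y) = 0 := by
      rw [Real.sin_sub]
      linear_combination Real.sin x * h2 - Real.sin y * h1
    exact (mul_eq_zero.mp this).resolve_left hκ.ne'
  have := (Real.sin_eq_zero_iff_of_lt_of_lt (by linarith [hx.1, hy.2]) (by linarith [hx.2, hy.1])).mp h
  linarith

theorem aux_cot (κ a x : ℝ) (hκ : 0 < κ) (hx : x ∈ Set.Ioo 0 Real.pi) :
    Real.cot x = -a / κ ↔ κ * Real.cos x + a * Real.sin x = 0 := by
  have hs := Real.sin_pos_of_mem_Ioo hx
  rw [Real.cot_eq_cos_div_sin, div_eq_div_iff hs.ne' hκ.ne']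
  constructor <;> intro h <;> linarith

theorem stmt_5 (s κ a b : ℝ) (hκ : 0 < κ) :
    (b ≠ s → ∀ t : ℝ,
      (κ : ℂ) * (Real.cos (κ * t / 2) : ℝ)
        + ((a : ℂ) + Complex.I * ((b : ℂ) - (s : ℂ))) * (Real.sin (κ * t / 2) : ℝ) ≠ 0) ∧
    (b = s → ∃ t₀ : ℝ,
      IsLeast {t : ℝ | 0 < t ∧
        (κ : ℂ) * (Real.cos (κ * t / 2) : ℝ)
          + ((a : ℂ) + Complex.I * ((b : ℂ) - (s : ℂ))) * (Real.sin (κ * t / 2) : ℝ) = 0} t₀ ∧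
      κ * t₀ / 2 ∈ Set.Ioo 0 Real.pi ∧ Real.cot (κ * t₀ / 2) = -a / κ ∧
      (∀ t : ℝ, κ * t / 2 ∈ Set.Ioo 0 Real.pi → Real.cot (κ * t / 2) = -a / κ → t = t₀)) := by
  constructor
  · intro hb t h
    rw [aux_split] at h
    obtain ⟨h1, h2⟩ := h
    have hs := (mul_eq_zero.mp h2).resolve_left (sub_ne_zero.mpr hb)
    rw [hs, mul_zero, add_zero] at h1
    have hc := (mul_eq_zero.mp h1).resolve_left hκ.ne'
    have := Real.sin_sq_add_cos_sq (κ * t / 2)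
    rw [hs, hc] at this
    norm_num at this
  · intro hb
    obtain ⟨x, hx, hz⟩ : ∃ x ∈ Set.Ioo 0 Real.pi, κ * Real.cos x + a * Real.sin x = 0 := by
      refine ⟨Real.arctan (a / κ) + Real.pi / 2, ⟨?_, ?_⟩, ?_⟩
      · linarith [Real.neg_pi_div_two_lt_arctan (a / κ)]
      · linarith [Real.arctan_lt_pi_div_two (a / κ)]
      · rw [Real.cos_add_pi_div_two, Real.sin_add_pi_div_two]
        have h := Real.tan_mul_cos (Real.cos_arctan_pos (a / κ)).ne'
        rw [Real.tan_arctan] at h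
        rw [← h]
        field_simp
        ring
    have hx0 : κ * (2 * x / κ) / 2 = x := by field_simp
    refine ⟨2 * x / κ, ⟨⟨?_, ?_⟩, ?_⟩, ?_, ?_, ?_⟩
    · have := hx.1
      positivity
    · rw [aux_split, hx0]
      exact ⟨hz, by rw [hb]; ring⟩
    · rintro t ⟨ht, h⟩
      rw [aux_split] at h
      by_contra hlt
      rw [not_le, lt_div_iff₀ hκ] at hlt
      have := aux_unique κ a (κ * t / 2) x hκ
        ⟨by positivity, by linarith [hx.2]⟩ hx h.1 hz
      linarith
    · rw [hx0]; exact hx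
    · rw [hx0]; exact (aux_cot κ a x hκ hx).mpr hz
    · intro t ht h
      have := aux_unique κ a _ x hκ ht hx ((aux_cot κ a _ hκ ht).mp h) hz
      rw [eq_div_iff hκ.ne']
      linarith
end

section
/- Let s, δ ∈ ℝ with s² + 4(1 - sδ) > 0 and set κ := √(s² + 4(1 - sδ)). Let a, b ∈ ℝ and define, for t in a neighborhood of 0 where cos(κt/2) ≠ 0 and D(t) > 0, T(t) := tan(κt/2), D(t) := (1 + a·T(t)/κ)² + ((b - s)·T(t)/κ)², U(t) := [(-κ·T(t) + a)(1 + a·T(t)/κ) + (b - s)²·T(t)/κ] / D(t), and P(t) := s + (1 + T(t)²)(b - s)/D(t). Then Z := U + iP satisfies the Riccati equation Z' = -(1/2)Z² + isZ - 2(1 - sδ) with Z(0) = a + ib. -/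
/-- `T(t) = tan(κt/2)`. -/
noncomputable def Tfun (κ t : ℝ) : ℝ := Real.tan (κ * t / 2)

/-- The denominator `D(t)` of the explicit solution formula. -/
noncomputable def Dfun (κ s a b t : ℝ) : ℝ :=
  (1 + a * Tfun κ t / κ)^2 + ((b - s) * Tfun κ t / κ)^2

/-- Explicit formula for `u_x` along the Lagrangian flow. -/
noncomputable def Ufun (κ s a b t : ℝ) : ℝ :=
  ((-(κ * Tfun κ t) + a) * (1 + a * Tfun κ t / κ) + (b - s)^2 * Tfun κ t / κ) / Dfun κ s a b t

/-- Explicit formula for `ρ` along the Lagrangian flow. -/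
noncomputable def Pfun (κ s a b t : ℝ) : ℝ :=
  s + (1 + (Tfun κ t)^2) * (b - s) / Dfun κ s a b t

/-- Complex form of the explicit solution. -/
theorem Z_eq (κ s a b t : ℝ) :
    (Ufun κ s a b t : ℂ) + Complex.I * (Pfun κ s a b t : ℝ) =
      Complex.I * s + (((a : ℂ) + Complex.I * (b - s)) - κ * (Tfun κ t : ℝ)) /
        (1 + ((a : ℂ) + Complex.I * (b - s)) * ((Tfun κ t / κ : ℝ) : ℂ)) := by
  have hD : Complex.normSq (1 + ((a : ℂ) + Complex.I * (b - s)) * ((Tfun κ t / κ : ℝ) : ℂ))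
      = Dfun κ s a b t := by
    rw [Complex.normSq_apply, Dfun]
    simp only [Complex.add_re, Complex.add_im, Complex.mul_re, Complex.mul_im, Complex.sub_re,
      Complex.sub_im, Complex.ofReal_re, Complex.ofReal_im, Complex.I_re, Complex.I_im,
      Complex.one_re, Complex.one_im]
    ring
  by_cases hκ : κ = 0
  · subst hκ
    apply Complex.ext <;> simp [Ufun, Pfun, Dfun, Tfun]
  apply Complex.ext
  · rw [Complex.add_re, Complex.add_re, Complex.div_re, hD]
    simp only [Complex.add_re, Complex.add_im, Complex.mul_re, Complex.mul_im, Complex.sub_re,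
      Complex.sub_im, Complex.ofReal_re, Complex.ofReal_im, Complex.I_re, Complex.I_im,
      Complex.one_re, Complex.one_im, Ufun]
    ring
  · rw [Complex.add_im, Complex.add_im, Complex.div_im, hD]
    simp only [Complex.add_re, Complex.add_im, Complex.mul_re, Complex.mul_im, Complex.sub_re,
      Complex.sub_im, Complex.ofReal_re, Complex.ofReal_im, Complex.I_re, Complex.I_im,
      Complex.one_re, Complex.one_im, Pfun]
    have : κ * (Tfun κ t / κ) = Tfun κ t := by field_simp
    linear_combination (-(Tfun κ t) * (b - s) / Dfun κ s a b t) * this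

theorem stmt_6 (s δ a b κ : ℝ) (hpos : 0 < s^2 + 4 * (1 - s * δ))
    (hκ : κ = Real.sqrt (s^2 + 4 * (1 - s * δ))) :
    ((Ufun κ s a b 0 : ℂ) + Complex.I * (Pfun κ s a b 0 : ℝ) = (a : ℂ) + Complex.I * (b : ℂ)) ∧
    ∀ t : ℝ, Real.cos (κ * t / 2) ≠ 0 → 0 < Dfun κ s a b t →
      HasDerivAt (fun τ => (Ufun κ s a b τ : ℂ) + Complex.I * (Pfun κ s a b τ : ℝ))
        (-(1/2) * ((Ufun κ s a b t : ℂ) + Complex.I * (Pfun κ s a b t : ℝ))^2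
          + Complex.I * (s : ℂ) * ((Ufun κ s a b t : ℂ) + Complex.I * (Pfun κ s a b t : ℝ))
          - 2 * ((1 : ℂ) - (s : ℂ) * (δ : ℂ))) t := by
  have hκ0 : 0 < κ := by rw [hκ]; exact Real.sqrt_pos.mpr hpos
  have hκ2 : κ ^ 2 = s^2 + 4 * (1 - s * δ) := by rw [hκ]; exact Real.sq_sqrt hpos.le
  have hκC : (κ : ℂ) ^ 2 = (s : ℂ)^2 + 4 * (1 - s * δ) := by exact_mod_cast hκ2
  have hκ0C : (κ : ℂ) ≠ 0 := by exact_mod_cast hκ0.ne'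
  constructor
  · simp [Ufun, Pfun, Dfun, Tfun]
  intro t hc hD
  simp only [Z_eq]
  have hT : HasDerivAt (fun τ => Tfun κ τ) (κ / 2 * (1 + Tfun κ t ^ 2)) t := by
    have h1 : HasDerivAt (fun τ : ℝ => κ * τ / 2) (κ / 2) t := by
      simpa using ((hasDerivAt_id t).const_mul κ).div_const 2
    have h2 := (Real.hasDerivAt_tan hc).comp t h1
    refine h2.congr_deriv ?_
    have h3 : 1 + Real.tan (κ * t / 2) ^ 2 = 1 / Real.cos (κ * t / 2) ^ 2 := by
      rw [Real.tan_eq_sin_div_cos]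
      field_simp
      linarith [Real.sin_sq_add_cos_sq (κ * t / 2)]
    rw [Tfun, h3]
    ring
  have hTC : HasDerivAt (fun τ => ((Tfun κ τ : ℝ) : ℂ)) ((κ / 2 * (1 + Tfun κ t ^ 2) : ℝ) : ℂ) t :=
    hT.ofReal_comp
  have hne : (1 + ((a : ℂ) + Complex.I * (b - s)) * ((Tfun κ t / κ : ℝ) : ℂ)) ≠ 0 := by
    intro h
    have hr := congrArg Complex.re h
    have hi := congrArg Complex.im h
    simp only [Complex.add_re, Complex.add_im, Complex.mul_re, Complex.mul_im, Complex.sub_re,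
      Complex.sub_im, Complex.ofReal_re, Complex.ofReal_im, Complex.I_re, Complex.I_im,
      Complex.one_re, Complex.one_im, Complex.zero_re, Complex.zero_im] at hr hi
    have e1 : 1 + a * Tfun κ t / κ = 0 := by linear_combination hr
    have e2 : (b - s) * Tfun κ t / κ = 0 := by linear_combination hi
    rw [Dfun, e1, e2] at hD
    norm_num at hD
  push_cast at hne hTC ⊢
  generalize (a : ℂ) + Complex.I * (b - s) = w at *
  have hnum := (hTC.const_mul (κ : ℂ)).const_sub w
  have hden := ((hTC.div_const (κ : ℂ)).const_mul w).const_add 1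
  refine ((hnum.div hden hne).const_add (Complex.I * (s : ℂ))).congr_deriv ?_
  generalize ((Tfun κ t : ℝ) : ℂ) = T at *
  have key : -(1/2) * (Complex.I * (s : ℂ) + (w - κ * T) / (1 + w * (T / κ))) ^ 2
      + Complex.I * s * (Complex.I * (s : ℂ) + (w - κ * T) / (1 + w * (T / κ)))
      - 2 * (1 - s * δ) = -(1/2) * (((w - κ * T) / (1 + w * (T / κ))) ^ 2 + (κ : ℂ) ^ 2) := by
    rw [hκC]
    linear_combination ((s : ℂ) ^ 2 / 2) * Complex.I_sq
  rw [key, div_pow, div_add' _ _ _ (pow_ne_zero 2 hne), mul_div_assoc']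
  congr 1
  field_simp
  ring
end

section
/- Let s, δ ∈ ℝ with s² + 4(1 - sδ) > 0 and κ := √(s² + 4(1 - sδ)). Let u, ρ : [0,T) × ℝ → ℝ be a C² solution of the magnetic two-component Hunter–Saxton system with c2 = 1, i.e. u_{tx} = -(1/2)u_x² - u u_{xx} + (1/2)ρ² - (sρ + 2(1 - sδ)) and ρ_t = -(ρu)_x + s u_x, and let φ solve φ_t(t,x) = u(t,φ(t,x)), φ(0,x) = x. Set a := u_x(0,x), b := ρ(0,x), T(t) := tan(κt/2), D(t) := (1 + a·T(t)/κ)² + ((b-s)·T(t)/κ)². Then for all t ∈ [0,T) with cos(κt/2) ≠ 0 and D(t) > 0: u_x(t, φ(t,x)) = [(-κ·T(t) + a)(1 + a·T(t)/κ) + (b-s)²·T(t)/κ] / D(t) and ρ(t, φ(t,x)) = s + (1 + T(t)²)(b - s)/D(t). -/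
lemma chain_aux (f : ℝ × ℝ → ℝ) (g : ℝ → ℝ) (t c : ℝ) (hf : DifferentiableAt ℝ f (t, g t))
    (hg : HasDerivAt g c t) :
    HasDerivAt (fun τ => f (τ, g τ)) (pdt f t (g t) + c * pdx f t (g t)) t := by
  have hF := hf.hasFDerivAt
  have h1 : HasDerivAt (fun τ => f (τ, g t)) (fderiv ℝ f (t, g t) (1, 0)) t :=
    HasFDerivAt.comp_hasDerivAt (f := fun τ : ℝ => (τ, g t)) t hF
      ((hasDerivAt_id t).prodMk (hasDerivAt_const t (g t)))
  have h2 : HasDerivAt (fun y => f (t, y)) (fderiv ℝ f (t, g t) (0, 1)) (g t) :=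
    HasFDerivAt.comp_hasDerivAt (f := fun y : ℝ => (t, y)) (g t) hF
      ((hasDerivAt_const (g t) t).prodMk (hasDerivAt_id (g t)))
  have h3 : HasDerivAt (fun τ => f (τ, g τ)) (fderiv ℝ f (t, g t) (1, c)) t :=
    HasFDerivAt.comp_hasDerivAt (f := fun τ : ℝ => (τ, g τ)) t hF
      ((hasDerivAt_id t).prodMk hg)
  have e : ((1 : ℝ), c) = (1, 0) + c • ((0 : ℝ), (1 : ℝ)) := by simp
  rw [e, map_add, map_smul, smul_eq_mul] at h3
  unfold pdt pdx
  rw [h1.deriv, h2.deriv]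
  exact h3

lemma pdx_contDiffOn (u : ℝ × ℝ → ℝ) (Tm : ℝ)
    (hu : ContDiffOn ℝ 2 u (Set.Ico 0 Tm ×ˢ Set.univ)) :
    ContDiffOn ℝ 1 (fun p : ℝ × ℝ => pdx u p.1 p.2) (Set.Ico 0 Tm ×ˢ Set.univ) := by
  have hS : UniqueDiffOn ℝ (Set.Ico 0 Tm ×ˢ (Set.univ : Set ℝ)) :=
    (uniqueDiffOn_Ico 0 Tm).prod uniqueDiffOn_univ
  have h1 : ContDiffOn ℝ 1 (fun p => fderivWithin ℝ u (Set.Ico 0 Tm ×ˢ (Set.univ : Set ℝ)) p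
      ((0 : ℝ), (1 : ℝ))) (Set.Ico 0 Tm ×ˢ Set.univ) :=
    (hu.fderivWithin hS (by norm_num)).clm_apply contDiffOn_const
  refine h1.congr ?_
  rintro ⟨t, y⟩ hp
  have hF := (hu.differentiableOn (by norm_num) (t, y) hp).hasFDerivWithinAt
  have hl : HasDerivWithinAt (fun z : ℝ => (t, z)) ((0 : ℝ), (1 : ℝ)) Set.univ y :=
    ((hasDerivAt_const y t).prodMk (hasDerivAt_id y)).hasDerivWithinAt
  have h2 : HasDerivWithinAt (fun z => u (t, z)) _ Set.univ y :=
    HasFDerivWithinAt.comp_hasDerivWithinAt (f := fun z : ℝ => (t, z)) y hF hl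
      (fun z _ => ⟨hp.1, trivial⟩)
  exact (hasDerivWithinAt_univ.mp h2).deriv

/-- The Riccati system along a trajectory, linearised. -/
lemma riccati_aux (κ a r t : ℝ) (hκ : κ ≠ 0) (ht : 0 ≤ t) (U R : ℝ → ℝ)
    (hU0 : U 0 = a) (hR0 : R 0 = r)
    (hUc : ContinuousOn U (Set.Icc 0 t)) (hRc : ContinuousOn R (Set.Icc 0 t))
    (hU : ∀ τ ∈ Set.Ioo 0 t, HasDerivAt U (((R τ)^2 - (U τ)^2 - κ^2) / 2) τ)
    (hR : ∀ τ ∈ Set.Ioo 0 t, HasDerivAt R (-(R τ * U τ)) τ) :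
    U t * (Real.cos (κ * t / 2) + a / κ * Real.sin (κ * t / 2))
      - R t * (r / κ * Real.sin (κ * t / 2))
      = -(κ * Real.sin (κ * t / 2)) + a * Real.cos (κ * t / 2) ∧
    U t * (r / κ * Real.sin (κ * t / 2))
      + R t * (Real.cos (κ * t / 2) + a / κ * Real.sin (κ * t / 2))
      = r * Real.cos (κ * t / 2) := by
  obtain ⟨M, hM⟩ := isCompact_Icc.exists_bound_of_continuousOn hUc
  set C : ℝ → ℝ := fun τ => Real.cos (κ * τ / 2) with hC
  set S : ℝ → ℝ := fun τ => Real.sin (κ * τ / 2) with hS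
  have hlin : ∀ τ, HasDerivAt (fun τ : ℝ => κ * τ / 2) (κ / 2) τ := fun τ => by
    simpa using ((hasDerivAt_id τ).const_mul κ).div_const 2
  have hCd : ∀ τ, HasDerivAt C (-(S τ) * (κ / 2)) τ := fun τ => (hlin τ).cos
  have hSd : ∀ τ, HasDerivAt S (C τ * (κ / 2)) τ := fun τ => (hlin τ).sin
  have hCc : Continuous C := by fun_prop
  have hSc : Continuous S := by fun_prop
  set E1 : ℝ → ℝ := fun τ => U τ * (C τ + a / κ * S τ) - R τ * (r / κ * S τ)
    - (-(κ * S τ) + a * C τ) with hE1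
  set E2 : ℝ → ℝ := fun τ => U τ * (r / κ * S τ) + R τ * (C τ + a / κ * S τ) - r * C τ with hE2
  have hE1d : ∀ τ ∈ Set.Ioo 0 t, HasDerivAt E1 (-(1/2) * (U τ * E1 τ - R τ * E2 τ)) τ := by
    intro τ hτ
    have := (((hU τ hτ).mul ((hCd τ).add ((hSd τ).const_mul (a / κ)))).sub
      ((hR τ hτ).mul ((hSd τ).const_mul (r / κ)))).sub
      (((hSd τ).const_mul κ).neg.add ((hCd τ).const_mul a))
    refine HasDerivAt.congr_deriv this ?_
    simp only [hE1, hE2, Pi.add_apply]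
    field_simp
    ring
  have hE2d : ∀ τ ∈ Set.Ioo 0 t, HasDerivAt E2 (-(1/2) * (U τ * E2 τ + R τ * E1 τ)) τ := by
    intro τ hτ
    have := (((hU τ hτ).mul ((hSd τ).const_mul (r / κ))).add
      ((hR τ hτ).mul ((hCd τ).add ((hSd τ).const_mul (a / κ))))).sub
      ((hCd τ).const_mul r)
    refine HasDerivAt.congr_deriv this ?_
    simp only [hE1, hE2, Pi.add_apply]
    field_simp
    ring
  have hE1c : ContinuousOn E1 (Set.Icc 0 t) := by fun_prop
  have hE2c : ContinuousOn E2 (Set.Icc 0 t) := by fun_prop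
  set N : ℝ → ℝ := fun τ => (E1 τ ^ 2 + E2 τ ^ 2) * Real.exp (-(M * τ)) with hN
  have hNc : ContinuousOn N (Set.Icc 0 t) := by fun_prop
  have hNd : ∀ τ ∈ Set.Ioo 0 t,
      HasDerivAt N (-(U τ + M) * (E1 τ ^ 2 + E2 τ ^ 2) * Real.exp (-(M * τ))) τ := by
    intro τ hτ
    have hexp : HasDerivAt (fun τ : ℝ => Real.exp (-(M * τ))) (Real.exp (-(M * τ)) * (-M)) τ := by
      have : HasDerivAt (fun τ : ℝ => -(M * τ)) (-M) τ := by
        simpa using (hasDerivAt_id τ).const_mul (-M)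
      exact this.exp
    have := (((hE1d τ hτ).pow 2).add ((hE2d τ hτ).pow 2)).mul hexp
    refine HasDerivAt.congr_deriv this ?_
    simp only [Pi.add_apply, Pi.pow_apply]
    push_cast
    ring
  have hanti : AntitoneOn N (Set.Icc 0 t) := by
    apply antitoneOn_of_deriv_nonpos (convex_Icc 0 t) hNc
    · intro τ hτ
      rw [interior_Icc] at hτ
      exact (hNd τ hτ).differentiableAt.differentiableWithinAt
    · intro τ hτ
      rw [interior_Icc] at hτ
      rw [(hNd τ hτ).deriv]
      have h1 := hM τ ⟨hτ.1.le, hτ.2.le⟩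
      rw [Real.norm_eq_abs] at h1
      have h2 : 0 ≤ U τ + M := by linarith [(abs_le.mp h1).1]
      have h3 : 0 ≤ (U τ + M) * (E1 τ ^ 2 + E2 τ ^ 2) * Real.exp (-(M * τ)) := by positivity
      linarith
  have hN0 : N 0 = 0 := by
    simp [hN, hE1, hE2, hC, hS, hU0, hR0]
  have hle := hanti ⟨le_refl 0, ht⟩ ⟨ht, le_refl t⟩ ht
  rw [hN0] at hle
  have hsum : E1 t ^ 2 + E2 t ^ 2 ≤ 0 := by
    by_contra hh
    push Not at hh
    have : 0 < N t := mul_pos hh (Real.exp_pos _)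
    linarith
  have e1 : E1 t = 0 := by nlinarith [sq_nonneg (E1 t), sq_nonneg (E2 t)]
  have e2 : E2 t = 0 := by nlinarith [sq_nonneg (E1 t), sq_nonneg (E2 t)]
  simp only [hE1, hE2] at e1 e2
  constructor <;> linarith

theorem stmt_7 (s δ κ Tm : ℝ) (hpos : 0 < s^2 + 4 * (1 - s * δ))
    (hκ : κ = Real.sqrt (s^2 + 4 * (1 - s * δ)))
    (u ρ φ : ℝ × ℝ → ℝ)
    (hu : ContDiffOn ℝ 2 u (Set.Ico 0 Tm ×ˢ Set.univ))
    (hρ : ContDiffOn ℝ 2 ρ (Set.Ico 0 Tm ×ˢ Set.univ))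
    (hPDE1 : ∀ t ∈ Set.Ico (0:ℝ) Tm, ∀ x : ℝ,
      pdt (fun p => pdx u p.1 p.2) t x =
        -(1/2) * (pdx u t x)^2 - u (t, x) * pdx (fun p => pdx u p.1 p.2) t x
          + (1/2) * (ρ (t, x))^2 - (s * ρ (t, x) + 2 * (1 - s * δ)))
    (hPDE2 : ∀ t ∈ Set.Ico (0:ℝ) Tm, ∀ x : ℝ,
      pdt ρ t x = -(pdx (fun p => ρ p * u p) t x) + s * pdx u t x)
    (hφ : ∀ t ∈ Set.Ico (0:ℝ) Tm, ∀ x : ℝ,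
      HasDerivAt (fun τ => φ (τ, x)) (u (t, φ (t, x))) t)
    (hφ0 : ∀ x : ℝ, φ (0, x) = x)
    (x : ℝ) :
    ∀ t ∈ Set.Ico (0:ℝ) Tm,
      Real.cos (κ * t / 2) ≠ 0 →
      0 < Dfun κ s (pdx u 0 x) (ρ (0, x)) t →
      pdx u t (φ (t, x)) = Ufun κ s (pdx u 0 x) (ρ (0, x)) t ∧
      ρ (t, φ (t, x)) = Pfun κ s (pdx u 0 x) (ρ (0, x)) t := by
  intro t ht hcos hD
  have hκpos : 0 < κ := by rw [hκ]; exact Real.sqrt_pos.mpr hpos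
  have hκ2 : κ^2 = s^2 + 4 * (1 - s * δ) := by rw [hκ]; exact Real.sq_sqrt hpos.le
  have hv := pdx_contDiffOn u Tm hu
  have hnhds : ∀ τ ∈ Set.Ioo 0 t, ∀ y : ℝ,
      (Set.Ico 0 Tm ×ˢ (Set.univ : Set ℝ)) ∈ nhds (τ, y) := fun τ hτ y =>
    prod_mem_nhds (Ico_mem_nhds hτ.1 (hτ.2.trans ht.2)) Filter.univ_mem
  have hsub : ∀ τ ∈ Set.Icc 0 t, τ ∈ Set.Ico 0 Tm := fun τ hτ => ⟨hτ.1, hτ.2.trans_lt ht.2⟩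
  have hγ : ContinuousOn (fun τ => (τ, φ (τ, x))) (Set.Icc 0 t) :=
    continuousOn_id.prodMk fun τ hτ => (hφ τ (hsub τ hτ) x).continuousAt.continuousWithinAt
  have hmaps : Set.MapsTo (fun τ => (τ, φ (τ, x))) (Set.Icc 0 t)
      (Set.Ico 0 Tm ×ˢ (Set.univ : Set ℝ)) := fun τ hτ => ⟨hsub τ hτ, trivial⟩
  obtain ⟨h1, h2⟩ := riccati_aux κ (pdx u 0 x) (ρ (0, x) - s) t hκpos.ne' ht.1
    (fun τ => pdx u τ (φ (τ, x))) (fun τ => ρ (τ, φ (τ, x)) - s)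
    (by simp [hφ0]) (by simp [hφ0])
    (hv.continuousOn.comp hγ hmaps)
    ((hρ.continuousOn.comp hγ hmaps).sub continuousOn_const)
    (by
      intro τ hτ
      have hτ' := hsub τ ⟨hτ.1.le, hτ.2.le⟩
      have hd := (hv.contDiffAt (hnhds τ hτ (φ (τ, x)))).differentiableAt (by norm_num)
      have := chain_aux _ (fun τ => φ (τ, x)) τ _ hd (hφ τ hτ' x)
      refine HasDerivAt.congr_deriv this ?_
      rw [hPDE1 τ hτ' (φ (τ, x)), hκ2]
      ring)
    (by
      intro τ hτ
      have hτ' := hsub τ ⟨hτ.1.le, hτ.2.le⟩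
      have hd := (hρ.contDiffAt (hnhds τ hτ (φ (τ, x)))).differentiableAt (by norm_num)
      have hdu := (hu.contDiffAt (hnhds τ hτ (φ (τ, x)))).differentiableAt (by norm_num)
      have := (chain_aux _ (fun τ => φ (τ, x)) τ _ hd (hφ τ hτ' x)).sub_const s
      refine HasDerivAt.congr_deriv this ?_
      have hl : DifferentiableAt ℝ (fun y : ℝ => (τ, y)) (φ (τ, x)) := by fun_prop
      have hρ' : DifferentiableAt ℝ (fun y => ρ (τ, y)) (φ (τ, x)) :=
        DifferentiableAt.comp (f := fun y : ℝ => (τ, y)) (φ (τ, x)) hd hl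
      have hu' : DifferentiableAt ℝ (fun y => u (τ, y)) (φ (τ, x)) :=
        DifferentiableAt.comp (f := fun y : ℝ => (τ, y)) (φ (τ, x)) hdu hl
      have hm : pdx (fun p => ρ p * u p) τ (φ (τ, x)) =
          pdx ρ τ (φ (τ, x)) * u (τ, φ (τ, x)) + ρ (τ, φ (τ, x)) * pdx u τ (φ (τ, x)) :=
        deriv_fun_mul hρ' hu'
      rw [hPDE2 τ hτ' (φ (τ, x)), hm]
      ring)
  generalize pdx u t (φ (t, x)) = U at h1 h2 ⊢
  generalize ρ (t, φ (t, x)) = P at h1 h2 ⊢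
  generalize pdx u 0 x = a at h1 h2 hD ⊢
  generalize ρ (0, x) = b at h1 h2 hD ⊢
  have hS : Real.sin (κ * t / 2) = Tfun κ t * Real.cos (κ * t / 2) := by
    unfold Tfun; rw [Real.tan_mul_cos hcos]
  rw [hS] at h1 h2
  unfold Ufun Pfun
  have hDne := hD.ne'
  have hDdef : Dfun κ s a b t = (1 + a * Tfun κ t / κ)^2 + ((b - s) * Tfun κ t / κ)^2 := rfl
  generalize Dfun κ s a b t = D at hDne hDdef ⊢
  generalize Tfun κ t = T at h1 h2 hDdef ⊢
  have k1 : U * (1 + a * T / κ) - (P - s) * ((b - s) * T / κ) = -(κ * T) + a := by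
    apply mul_right_cancel₀ hcos
    linear_combination h1
  have k2 : U * ((b - s) * T / κ) + (P - s) * (1 + a * T / κ) = b - s := by
    apply mul_right_cancel₀ hcos
    linear_combination h2
  constructor
  · rw [eq_div_iff hDne, hDdef]
    linear_combination (1 + a * T / κ) * k1 + ((b - s) * T / κ) * k2
  · rw [← sub_eq_iff_eq_add', eq_div_iff hDne, hDdef]
    have hk : κ * κ⁻¹ = 1 := mul_inv_cancel₀ hκpos.ne'
    linear_combination (1 + a * T / κ) * k2 - ((b - s) * T / κ) * k1 + (b - s) * T^2 * hk
end

section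
/- Let s, c2, δ ∈ ℝ and let f, g : I → ℝ be twice differentiable on an open interval I with f'' + s·g' + (c2 - sδ)·f = 0 and g'' - s·f' + (c2 - sδ)·g = 0, and f(t)² + g(t)² > 0 on I. Define U(t) := 2(f(t)f'(t) + g(t)g'(t))/(f(t)² + g(t)²) and P(t) := 2(f(t)g'(t) - f'(t)g(t))/(f(t)² + g(t)²). Then U' = -(1/2)U² + (1/2)P² - (sP + 2(c2 - sδ)) and P' = (s - P)·U on I. -/
theorem stmt_10 (s c2 δ A B : ℝ) (f g f' g' : ℝ → ℝ)
    (hf : ∀ t ∈ Set.Ioo A B, HasDerivAt f (f' t) t)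
    (hg : ∀ t ∈ Set.Ioo A B, HasDerivAt g (g' t) t)
    (hf'' : ∀ t ∈ Set.Ioo A B, HasDerivAt f' (-(s * g' t) - (c2 - s * δ) * f t) t)
    (hg'' : ∀ t ∈ Set.Ioo A B, HasDerivAt g' (s * f' t - (c2 - s * δ) * g t) t)
    (hpos : ∀ t ∈ Set.Ioo A B, 0 < (f t)^2 + (g t)^2) :
    ∀ t ∈ Set.Ioo A B,
      HasDerivAt (fun τ => 2 * (f τ * f' τ + g τ * g' τ) / ((f τ)^2 + (g τ)^2))
        (-(1/2) * (2 * (f t * f' t + g t * g' t) / ((f t)^2 + (g t)^2))^2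
          + (1/2) * (2 * (f t * g' t - f' t * g t) / ((f t)^2 + (g t)^2))^2
          - (s * (2 * (f t * g' t - f' t * g t) / ((f t)^2 + (g t)^2))
              + 2 * (c2 - s * δ))) t ∧
      HasDerivAt (fun τ => 2 * (f τ * g' τ - f' τ * g τ) / ((f τ)^2 + (g τ)^2))
        ((s - 2 * (f t * g' t - f' t * g t) / ((f t)^2 + (g t)^2))
          * (2 * (f t * f' t + g t * g' t) / ((f t)^2 + (g t)^2))) t := by
  intro t ht
  have h1 := hf t ht
  have h2 := hg t ht
  have h3 := hf'' t ht
  have h4 := hg'' t ht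
  have hN : (f t)^2 + (g t)^2 ≠ 0 := (hpos t ht).ne'
  have hD := (h1.fun_pow 2).fun_add (h2.fun_pow 2)
  constructor
  · have h := (((h1.fun_mul h3).fun_add (h2.fun_mul h4)).const_mul 2).fun_div hD hN
    refine h.congr_deriv ?_
    push_cast
    field_simp
    ring
  · have h := (((h1.fun_mul h4).fun_sub (h3.fun_mul h2)).const_mul 2).fun_div hD hN
    refine h.congr_deriv ?_
    push_cast
    field_simp
    ring
end

section
/- Let (X, μ) be a measure space with μ a σ-finite measure, let θ₁, θ₂ ∈ ℝ with θ₁ ≠ θ₂, and let p₁, p₂ : X → ℂ be measurable functions such that (p₁(x), p₂(x)) ≠ (0, 0) for μ-almost every x. Then for Lebesgue-almost every t ∈ ℝ, the set { x ∈ X : e^{iθ₁t}·p₁(x) + e^{iθ₂t}·p₂(x) = 0 } has μ-measure zero. -/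
theorem zero_set_countable (θ₁ θ₂ : ℝ) (hθ : θ₁ ≠ θ₂) (a b : ℂ) (h : (a, b) ≠ (0, 0)) :
    {t : ℝ | Complex.exp (Complex.I * (θ₁ : ℂ) * (t : ℂ)) * a
          + Complex.exp (Complex.I * (θ₂ : ℂ) * (t : ℂ)) * b = 0}.Countable := by
  have key : ∀ t : ℝ, Complex.exp (Complex.I * (θ₁ : ℂ) * (t : ℂ)) * a
          + Complex.exp (Complex.I * (θ₂ : ℂ) * (t : ℂ)) * b = 0 →
          Complex.exp (Complex.I * ((θ₁ : ℂ) - θ₂) * (t : ℂ)) * a = -b := by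
    intro t ht
    have h2 := Complex.exp_ne_zero (Complex.I * (θ₂ : ℂ) * (t : ℂ))
    have e : Complex.exp (Complex.I * (θ₁ : ℂ) * (t : ℂ))
        = Complex.exp (Complex.I * (θ₂ : ℂ) * (t : ℂ))
          * Complex.exp (Complex.I * ((θ₁ : ℂ) - θ₂) * (t : ℂ)) := by
      rw [← Complex.exp_add]; congr 1; ring
    apply mul_left_cancel₀ h2
    rw [e] at ht
    linear_combination ht
  rcases Set.eq_empty_or_nonempty {t : ℝ | Complex.exp (Complex.I * (θ₁ : ℂ) * (t : ℂ)) * a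
          + Complex.exp (Complex.I * (θ₂ : ℂ) * (t : ℂ)) * b = 0} with h0 | ⟨s, hs⟩
  · rw [h0]; exact Set.countable_empty
  have ks := key s hs
  have ha : a ≠ 0 := by
    rintro rfl
    apply h
    have : b = 0 := by simpa using ks.symm
    rw [this]
  have hd : (θ₁ : ℝ) - θ₂ ≠ 0 := sub_ne_zero.mpr hθ
  refine (Set.countable_range (fun n : ℤ => s + n * (2 * Real.pi) / (θ₁ - θ₂))).mono ?_
  intro t ht
  have kt := key t ht
  have e := mul_right_cancel₀ ha (ks.trans kt.symm)
  obtain ⟨n, hn⟩ := Complex.exp_eq_exp_iff_exists_int.mp e.symm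
  refine ⟨n, ?_⟩
  have h3 : (((θ₁ - θ₂) * t : ℝ) : ℂ) = (((θ₁ - θ₂) * s + n * (2 * Real.pi) : ℝ) : ℂ) := by
    apply mul_left_cancel₀ Complex.I_ne_zero
    push_cast
    linear_combination hn
  have h4 := Complex.ofReal_injective h3
  simp only
  field_simp
  linear_combination -h4

theorem stmt_14 {X : Type*} [MeasurableSpace X] (μ : MeasureTheory.Measure X)
    [MeasureTheory.SigmaFinite μ]
    (θ₁ θ₂ : ℝ) (hθ : θ₁ ≠ θ₂) (p₁ p₂ : X → ℂ)
    (hm₁ : Measurable p₁) (hm₂ : Measurable p₂)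
    (hne : ∀ᵐ x ∂μ, (p₁ x, p₂ x) ≠ (0, 0)) :
    ∀ᵐ (t : ℝ) ∂(MeasureTheory.volume : MeasureTheory.Measure ℝ),
      μ {x : X |
        Complex.exp (Complex.I * (θ₁ : ℂ) * (t : ℂ)) * p₁ x
          + Complex.exp (Complex.I * (θ₂ : ℂ) * (t : ℂ)) * p₂ x = 0} = 0 := by
  have hmeas : MeasurableSet {z : X × ℝ | ¬ (Complex.exp (Complex.I * (θ₁ : ℂ) * (z.2 : ℂ)) * p₁ z.1
          + Complex.exp (Complex.I * (θ₂ : ℂ) * (z.2 : ℂ)) * p₂ z.1 = 0)} := by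
    refine (measurableSet_eq_fun ?_ measurable_const).compl
    fun_prop
  have := (MeasureTheory.Measure.ae_ae_comm (μ := μ)
    (ν := (MeasureTheory.volume : MeasureTheory.Measure ℝ))
    (p := fun x t => ¬ (Complex.exp (Complex.I * (θ₁ : ℂ) * (t : ℂ)) * p₁ x
          + Complex.exp (Complex.I * (θ₂ : ℂ) * (t : ℂ)) * p₂ x = 0)) hmeas).mp (by
      filter_upwards [hne] with x hx
      rw [MeasureTheory.ae_iff]
      simp only [not_not]
      exact (zero_set_countable θ₁ θ₂ hθ _ _ hx).measure_zero _)
  filter_upwards [this] with t ht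
  rw [MeasureTheory.ae_iff] at ht
  simpa only [not_not] using ht
end

section
/- Let s, c2, δ ∈ ℝ with s² + 4(c2 - sδ) > 0, set κ := √(s² + 4(c2 - sδ)), and let a, b ∈ ℝ with b ≠ s. Then there exists a globally defined pair of differentiable functions U, P : ℝ → ℝ with U(0) = a, P(0) = b satisfying the Lagrangian ODE system U' = -(1/2)U² + (1/2)P² - (sP + 2(c2 - sδ)) and P' = -PU + sU on all of ℝ; explicitly, U + iP = is + κ·(W₀·cos(κt/2) - κ·sin(κt/2))/(κ·cos(κt/2) + W₀·sin(κt/2)) with W₀ := a + i(b - s). -/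
theorem stmt_16 (s c2 δ a b κ : ℝ) (hpos : 0 < s^2 + 4 * (c2 - s * δ))
    (hκ : κ = Real.sqrt (s^2 + 4 * (c2 - s * δ))) (hb : b ≠ s) :
    ∃ U P : ℝ → ℝ, U 0 = a ∧ P 0 = b ∧
      (∀ t : ℝ,
        HasDerivAt U
          (-(1/2) * (U t)^2 + (1/2) * (P t)^2 - (s * P t + 2 * (c2 - s * δ))) t ∧
        HasDerivAt P (-(P t) * U t + s * U t) t) ∧
      (∀ t : ℝ, (U t : ℂ) + Complex.I * (P t : ℝ) =
        Complex.I * (s : ℂ)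
          + (κ : ℂ) * (((a : ℂ) + Complex.I * ((b : ℂ) - (s : ℂ))) * (Real.cos (κ * t / 2) : ℝ)
              - (κ : ℂ) * (Real.sin (κ * t / 2) : ℝ)) /
            ((κ : ℂ) * (Real.cos (κ * t / 2) : ℝ)
              + ((a : ℂ) + Complex.I * ((b : ℂ) - (s : ℂ))) * (Real.sin (κ * t / 2) : ℝ))) := by
  have hk : 0 < κ := by rw [hκ]; exact Real.sqrt_pos.mpr hpos
  have hk2 : κ ^ 2 = s^2 + 4 * (c2 - s * δ) := by rw [hκ]; exact Real.sq_sqrt hpos.le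
  clear hκ
  obtain ⟨q, rfl⟩ : ∃ q, b = s + q := ⟨b - s, by ring⟩
  have hq : q ≠ 0 := by intro h; apply hb; simp [h]
  set C : ℝ → ℝ := fun t => Real.cos (κ * t / 2) with hC
  set S : ℝ → ℝ := fun t => Real.sin (κ * t / 2) with hS
  have hCS : ∀ t, C t ^ 2 + S t ^ 2 = 1 := fun t => Real.cos_sq_add_sin_sq _
  have hl : ∀ t : ℝ, HasDerivAt (fun t : ℝ => κ * t / 2) (κ / 2) t := fun t => by
    simpa using ((hasDerivAt_id t).const_mul κ).div_const 2
  have hC' : ∀ t, HasDerivAt C (-S t * (κ / 2)) t := fun t => (hl t).cos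
  have hS' : ∀ t, HasDerivAt S (C t * (κ / 2)) t := fun t => (hl t).sin
  have hC0 : C 0 = 1 := by simp [hC]
  have hS0 : S 0 = 0 := by simp [hS]
  have key : ∀ t, (κ * C t + a * S t) ^ 2 + q ^ 2 * S t ^ 2 ≠ 0 := by
    intro t h
    have h1 : q ^ 2 * S t ^ 2 = 0 := by
      nlinarith [sq_nonneg (κ * C t + a * S t), mul_nonneg (sq_nonneg q) (sq_nonneg (S t))]
    have h2 : S t = 0 := by
      rcases mul_eq_zero.mp h1 with h | h
      · exact absurd (pow_eq_zero_iff two_ne_zero |>.mp h) hq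
      · exact pow_eq_zero_iff two_ne_zero |>.mp h
    have h3 := hCS t
    rw [h2] at h h3
    have : κ ^ 2 * C t ^ 2 = 0 := by linarith
    have h4 : C t ^ 2 = 1 := by linarith
    rw [h4] at this
    nlinarith
  have hX : ∀ t, HasDerivAt (fun t => κ * C t + a * S t) (κ / 2 * (a * C t - κ * S t)) t := by
    intro t
    refine HasDerivAt.congr_deriv (((hC' t).const_mul κ).add ((hS' t).const_mul a)) ?_
    try simp only [Pi.pow_apply, Pi.mul_apply, Pi.add_apply, Nat.cast_ofNat, Nat.add_one_sub_one, pow_one]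
    ring
  have hY : ∀ t, HasDerivAt (fun t => a * C t - κ * S t) (-(κ / 2) * (κ * C t + a * S t)) t := by
    intro t
    refine HasDerivAt.congr_deriv (((hC' t).const_mul a).sub ((hS' t).const_mul κ)) ?_
    try simp only [Pi.pow_apply, Pi.mul_apply, Pi.add_apply, Nat.cast_ofNat, Nat.add_one_sub_one, pow_one]
    ring
  have hXY : ∀ t, (κ * C t + a * S t) * C t - (a * C t - κ * S t) * S t = κ := fun t => by
    linear_combination κ * hCS t
  have hN : ∀ t, HasDerivAt (fun t => (κ * C t + a * S t) ^ 2 + q ^ 2 * S t ^ 2)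
      (κ * ((κ * C t + a * S t) * (a * C t - κ * S t) + q ^ 2 * (C t * S t))) t := by
    intro t
    refine HasDerivAt.congr_deriv (((hX t).pow 2).add (((hS' t).pow 2).const_mul (q ^ 2))) ?_
    try simp only [Pi.pow_apply, Pi.mul_apply, Pi.add_apply, Nat.cast_ofNat, Nat.add_one_sub_one, pow_one]
        ring
  have hK : ∀ t, HasDerivAt
      (fun t => κ * ((κ * C t + a * S t) * (a * C t - κ * S t) + q ^ 2 * (C t * S t)))
      (κ ^ 2 / 2 * ((a * C t - κ * S t) ^ 2 - (κ * C t + a * S t) ^ 2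
        + q ^ 2 * (C t ^ 2 - S t ^ 2))) t := by
    intro t
    refine HasDerivAt.congr_deriv ((((hX t).mul (hY t)).add (((hC' t).mul (hS' t)).const_mul (q ^ 2))).const_mul κ) ?_
    try simp only [Pi.pow_apply, Pi.mul_apply, Pi.add_apply, Nat.cast_ofNat, Nat.add_one_sub_one, pow_one]
    ring
  refine ⟨fun t => κ * ((κ * C t + a * S t) * (a * C t - κ * S t) + q ^ 2 * (C t * S t)) /
      ((κ * C t + a * S t) ^ 2 + q ^ 2 * S t ^ 2),
    fun t => s + κ ^ 2 * q / ((κ * C t + a * S t) ^ 2 + q ^ 2 * S t ^ 2), ?_, ?_, ?_, ?_⟩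
  · simp only [hC0, hS0]
    field_simp
    ring
  · simp only [hC0, hS0]
    field_simp
    ring
  · intro t
    have hn := key t
    have hxy := hXY t
    constructor
    · refine HasDerivAt.congr_deriv ((hK t).div (hN t) hn) ?_
      try simp only [Pi.pow_apply, Pi.mul_apply, Pi.add_apply, Nat.cast_ofNat, Nat.add_one_sub_one, pow_one]
      have hc : c2 - s * δ = (κ ^ 2 - s ^ 2) / 4 := by linarith
      rw [hc]
      generalize κ * C t + a * S t = X at *
      generalize a * C t - κ * S t = Y at *
      field_simp
      linear_combination (4 * (q ^ 2 * κ ^ 2) * (X * C t - Y * S t + κ)) * hxy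
    · refine HasDerivAt.congr_deriv (((hasDerivAt_const t (κ ^ 2 * q)).div (hN t) hn).const_add s) ?_
      try simp only [Pi.pow_apply, Pi.mul_apply, Pi.add_apply, Nat.cast_ofNat, Nat.add_one_sub_one, pow_one]
      generalize (κ * C t + a * S t) ^ 2 + q ^ 2 * S t ^ 2 = N at *
      field_simp
      ring
  · intro t
    have hn := key t
    have hxy := hXY t
    change _ = Complex.I * (s : ℂ) + (κ : ℂ) * (((a : ℂ) + Complex.I * (((s + q : ℝ) : ℂ) - (s : ℂ)))
      * (C t : ℝ) - (κ : ℂ) * (S t : ℝ)) / ((κ : ℂ) * (C t : ℝ)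
      + ((a : ℂ) + Complex.I * (((s + q : ℝ) : ℂ) - (s : ℂ))) * (S t : ℝ))
    have hcs := hCS t
    beta_reduce
    generalize C t = c at *
    generalize S t = d at *
    have hn' : ((κ : ℂ) * c + a * d) ^ 2 + q ^ 2 * d ^ 2 ≠ 0 := by exact_mod_cast hn
    have hcs' : (c : ℂ) ^ 2 + d ^ 2 = 1 := by exact_mod_cast hcs
    have hfac : ((κ : ℂ) * c + a * d) ^ 2 + q ^ 2 * d ^ 2 =
        (κ * c + (a + Complex.I * q) * d) * (κ * c + (a - Complex.I * q) * d) := by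
      linear_combination ((q : ℂ) ^ 2 * d ^ 2) * Complex.I_sq
    have hD : (κ : ℂ) * c + (a + Complex.I * q) * d ≠ 0 := by
      intro h; apply hn'; rw [hfac, h, zero_mul]
    have e : (((s + q : ℝ) : ℂ) - (s : ℂ)) = q := by push_cast; ring
    rw [e]
    push_cast
    have hmain : (κ : ℂ) * (((a : ℂ) + Complex.I * q) * c - κ * d) / (κ * c + (a + Complex.I * q) * d)
      = (κ * ((κ * c + a * d) * (a * c - κ * d) + q ^ 2 * (c * d)) + Complex.I * (κ ^ 2 * q)) /
        (((κ : ℂ) * c + a * d) ^ 2 + q ^ 2 * d ^ 2) := by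
      rw [div_eq_div_iff hD hn', hfac]
      linear_combination (-(κ : ℂ) * (κ * c + (a + Complex.I * q) * d)) * (q ^ 2 * c * d * Complex.I_sq - Complex.I * q * κ * hcs')
    rw [hmain]
    ring
end
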